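/- arXiv:1109.5114 — 3 statements merged into one kernel-verified Lean document; each statement's English description precedes it below -/
import Mathlib

section
/- Let σ > 0. For each integer N ≥ 2, set θ_k = (k−1)π/N and a = σ·√(24/N), and let μ_N be the N-fold convolution μ(a, θ₁) ∗ ⋯ ∗ μ(a, θ_N), where μ(a, θ) is the pushforward of the uniform probability measure on [−a/2, a/2] under t ↦ (t·cos θ, t·sin θ) : ℝ → ℝ². Then μ_N converges weakly (in distribution), as N → ∞, to the centered Gaussian measure on ℝ² with covariance σ²·I, i.e., the product measure of two one-dimensional Gaussian measures each with mean 0 and variance σ². -/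
open Real Filter MeasureTheory

/-- `uniformDir a θ` is the pushforward of the uniform probability measure on `[-a/2, a/2]`
under `t ↦ (t cos θ, t sin θ) : ℝ → ℝ²`. -/
noncomputable def uniformDir (a θ : ℝ) : Measure (Fin 2 → ℝ) :=
  Measure.map (fun t : ℝ => ![t * Real.cos θ, t * Real.sin θ])
    ((ENNReal.ofReal (1 / a)) • volume.restrict (Set.Icc (-(a / 2)) (a / 2)))

/-!
By Lévy's continuity theorem it suffices that characteristic functions converge. At a linear form
with coordinates `(p, q)` the one of `μ_N` is `∏ k, sinc (x k)`, where
`x k = a / 2 * (p cos θ_k + q sin θ_k)`. Since `sinc x = exp (-x² / 6) + O(x⁴)` and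
`∑ k, x k ^ 4 = O(1 / N)`, the product is asymptotic to `exp (-(∑ k, x k ^ 2) / 6)`. The doubled
angles `2 θ_k` are the arguments of the `N`-th roots of unity, whose sum vanishes, so that
`∑ k, x k ^ 2 = 3 σ² (p² + q²)` exactly.
-/

open ProbabilityTheory Topology
open scoped NNReal

section CharacteristicFunctions

variable {E : Type*} [NormedAddCommGroup E] [NormedSpace ℝ E] [MeasurableSpace E] [BorelSpace E]

theorem tendsto_of_tendsto_charFunDual [FiniteDimensional ℝ E] {μ : ℕ → ProbabilityMeasure E}
    {μ₀ : ProbabilityMeasure E}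
    (h : ∀ L : StrongDual ℝ E,
      Tendsto (fun n ↦ charFunDual (μ n) L) atTop (𝓝 (charFunDual μ₀ L))) :
    Tendsto μ atTop (𝓝 μ₀) := by
  let e := toEuclidean (E := E)
  have map_symm_map (ν : ProbabilityMeasure E) :
      (ν.map e.continuous.aemeasurable).map e.symm.continuous.aemeasurable = ν := by
    ext : 1
    simp [Measure.map_map e.symm.continuous.measurable e.continuous.measurable]
  have tendsto_map : Tendsto (fun n ↦ (μ n).map e.continuous.aemeasurable) atTop
      (𝓝 (μ₀.map e.continuous.aemeasurable)) := by
    refine ProbabilityMeasure.tendsto_of_tendsto_charFun fun t ↦ ?_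
    simpa only [charFun_eq_charFunDual_toDualMap, ProbabilityMeasure.toMeasure_map,
      ← ContinuousLinearEquiv.coe_coe, charFunDual_map] using
      h ((InnerProductSpace.toDualMap ℝ _ t).comp (e : E →L[ℝ] _))
  simpa only [map_symm_map] using
    ProbabilityMeasure.tendsto_map_of_tendsto_of_continuous _ _ tendsto_map e.symm.continuous

theorem charFunDual_real (μ : Measure ℝ) (L : StrongDual ℝ ℝ) :
    charFunDual μ L = charFun μ (L 1) := by
  have apply_eq (x : ℝ) : L x = L 1 * x := by simpa [mul_comm] using L.map_smul x 1
  rw [charFunDual_apply, charFun_apply_real]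
  congr with x
  rw [← Complex.ofReal_mul, apply_eq x]

theorem charFunDual_map_smul_const (μ : Measure ℝ) (v : E) (L : StrongDual ℝ E) :
    charFunDual (μ.map (· • v)) L = charFun μ (L v) := by
  change charFunDual (μ.map (ContinuousLinearMap.toSpanSingleton ℝ v)) L = _
  simp [charFunDual_map, charFunDual_real]

theorem charFunDual_pi_gaussianReal {ι : Type*} [Fintype ι] [DecidableEq ι] (m : ι → ℝ)
    (v : ι → ℝ≥0) (L : StrongDual ℝ (ι → ℝ)) :
    charFunDual (Measure.pi fun i ↦ gaussianReal (m i) (v i)) L =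
      Complex.exp (∑ i,
        (L (Pi.single i 1) * m i * Complex.I - v i * L (Pi.single i 1) ^ 2 / 2)) := by
  simp only [charFunDual_pi, charFunDual_real, charFun_gaussianReal, Complex.exp_sum,
    ContinuousLinearMap.comp_apply, ContinuousLinearMap.single_apply]

theorem integral_cexp_mul_I_neg_self (r s : ℝ) :
    ∫ x in -r..r, Complex.exp (s * x * Complex.I) = 2 * r * sinc (r * s) := by
  by_cases hs : s = 0
  · simp [hs, ← two_mul]
  · have hs' : (s : ℂ) ≠ 0 := mod_cast hs
    have := intervalIntegral.integral_comp_mul_left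
      (fun y : ℝ ↦ Complex.exp (y * Complex.I)) (a := -r) (b := r) hs
    simp only [Complex.ofReal_mul, mul_neg, mul_comm s r, integral_exp_mul_I_eq_sinc] at this
    rw [this, Complex.real_smul]
    push_cast
    field_simp

theorem charFun_cond_Icc_neg_self {r : ℝ} (hr : 0 < r) (s : ℝ) :
    charFun (volume[|Set.Icc (-r) r]) s = sinc (r * s) := by
  have hr' : (r : ℂ) ≠ 0 := mod_cast hr.ne'
  have density_eq : (volume (Set.Icc (-r) r))⁻¹.toReal = (2 * r)⁻¹ := by
    simp [← two_mul, hr.le, mul_comm]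
  rw [charFun_apply_real, ProbabilityTheory.cond, integral_smul_measure,
    integral_Icc_eq_integral_Ioc, ← intervalIntegral.integral_of_le (by linarith),
    integral_cexp_mul_I_neg_self, density_eq, Complex.real_smul]
  push_cast
  field_simp

end CharacteristicFunctions

section Sinc

theorem norm_prod_sub_prod_le_sum {ι R : Type*} [NormedCommRing R] [NormOneClass R]
    (s : Finset ι) {f g : ι → R} (hf : ∀ i ∈ s, ‖f i‖ ≤ 1) (hg : ∀ i ∈ s, ‖g i‖ ≤ 1) :
    ‖∏ i ∈ s, f i - ∏ i ∈ s, g i‖ ≤ ∑ i ∈ s, ‖f i - g i‖ := by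
  classical
  induction s using Finset.induction_on with
  | empty => simp
  | insert j s hj ih =>
    simp only [Finset.forall_mem_insert] at hf hg
    have norm_prod_le_one : ‖∏ i ∈ s, f i‖ ≤ 1 :=
      (s.norm_prod_le f).trans (Finset.prod_le_one (fun _ _ ↦ norm_nonneg _) hf.2)
    rw [Finset.prod_insert hj, Finset.prod_insert hj, Finset.sum_insert hj]
    calc ‖f j * ∏ i ∈ s, f i - g j * ∏ i ∈ s, g i‖
        = ‖(f j - g j) * ∏ i ∈ s, f i + g j * (∏ i ∈ s, f i - ∏ i ∈ s, g i)‖ := by ring_nf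
      _ ≤ ‖f j - g j‖ * ‖∏ i ∈ s, f i‖ + ‖g j‖ * ‖∏ i ∈ s, f i - ∏ i ∈ s, g i‖ :=
        (norm_add_le _ _).trans (add_le_add (norm_mul_le _ _) (norm_mul_le _ _))
      _ ≤ ‖f j - g j‖ + ∑ i ∈ s, ‖f i - g i‖ :=
        add_le_add (mul_le_of_le_one_right (norm_nonneg _) norm_prod_le_one)
          ((mul_le_of_le_one_left (norm_nonneg _) hg.1).trans (ih hf.2 hg.2))

theorem abs_sinc_sub_one_sub_sq_div_six_le {x : ℝ} (hx : |x| ≤ 1) :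
    |sinc x - (1 - x ^ 2 / 6)| ≤ x ^ 4 / 100 := by
  by_cases h : x = 0
  · simp [h]
  · have quotient_eq : sinc x - (1 - x ^ 2 / 6) = (sin x - (x - x ^ 3 / 6)) / x := by
      rw [sinc_of_ne_zero h]
      field_simp
    rw [quotient_eq, abs_div, div_le_iff₀ (abs_pos.mpr h)]
    calc |sin x - (x - x ^ 3 / 6)| ≤ |x| ^ 5 / 100 := sin_bound hx
      _ = x ^ 4 / 100 * |x| := by rw [← Even.pow_abs (by decide : Even 4) x]; ring

theorem abs_sinc_sub_exp_neg_sq_div_six_le (x : ℝ) :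
    |sinc x - exp (-(x ^ 2 / 6))| ≤ 2 * x ^ 4 := by
  rcases le_total |x| 1 with hx | hx
  · have hx_sq : x ^ 2 ≤ 1 := (sq_le_one_iff_abs_le_one x).mpr hx
    have exp_bound : |exp (-(x ^ 2 / 6)) - 1 - -(x ^ 2 / 6)| ≤ (-(x ^ 2 / 6)) ^ 2 := by
      apply abs_exp_sub_one_sub_id_le
      rw [abs_neg, abs_of_nonneg (by positivity)]
      linarith
    calc |sinc x - exp (-(x ^ 2 / 6))|
        = |(sinc x - (1 - x ^ 2 / 6)) - (exp (-(x ^ 2 / 6)) - 1 - -(x ^ 2 / 6))| := by ring_nf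
      _ ≤ x ^ 4 / 100 + (-(x ^ 2 / 6)) ^ 2 :=
        (abs_sub _ _).trans (add_le_add (abs_sinc_sub_one_sub_sq_div_six_le hx) exp_bound)
      _ ≤ 2 * x ^ 4 := by linarith [show 0 ≤ x ^ 4 by positivity]
  · have one_le_pow : 1 ≤ x ^ 4 := by
      rw [← Even.pow_abs (by decide : Even 4) x]
      exact one_le_pow₀ hx
    have exp_le_one : exp (-(x ^ 2 / 6)) ≤ 1 := exp_le_one_iff.mpr (by linarith [sq_nonneg x])
    rw [abs_le]
    constructor <;> linarith [neg_one_le_sinc x, sinc_le_one x, exp_pos (-(x ^ 2 / 6))]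

theorem abs_prod_sinc_sub_exp_le {ι : Type*} (s : Finset ι) (x : ι → ℝ) :
    |∏ k ∈ s, sinc (x k) - exp (-((∑ k ∈ s, x k ^ 2) / 6))| ≤ 2 * ∑ k ∈ s, x k ^ 4 := by
  have exp_le_one (k : ι) : ‖exp (-(x k ^ 2 / 6))‖ ≤ 1 := by
    rw [norm_eq_abs, abs_exp, exp_le_one_iff]
    linarith [sq_nonneg (x k)]
  rw [Finset.sum_div, ← Finset.sum_neg_distrib, exp_sum, Finset.mul_sum]
  exact (norm_prod_sub_prod_le_sum s (fun k _ ↦ abs_sinc_le_one _) fun k _ ↦ exp_le_one k).trans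
    (Finset.sum_le_sum fun k _ ↦ abs_sinc_sub_exp_neg_sq_div_six_le (x k))

theorem tendsto_prod_sinc {α : Type*} {l : Filter α} {ι : α → Type*} (s : ∀ n, Finset (ι n))
    {x : ∀ n, ι n → ℝ} {v : ℝ} (h_sq : Tendsto (fun n ↦ ∑ k ∈ s n, x n k ^ 2) l (𝓝 v))
    (h_pow_four : Tendsto (fun n ↦ ∑ k ∈ s n, x n k ^ 4) l (𝓝 0)) :
    Tendsto (fun n ↦ ∏ k ∈ s n, sinc (x n k)) l (𝓝 (exp (-(v / 6)))) := by
  have tendsto_exp : Tendsto (fun n ↦ exp (-((∑ k ∈ s n, x n k ^ 2) / 6))) l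
      (𝓝 (exp (-(v / 6)))) := (continuous_exp.tendsto _).comp (h_sq.div_const 6).neg
  have tendsto_sub : Tendsto (fun n ↦ ∏ k ∈ s n, sinc (x n k) -
      exp (-((∑ k ∈ s n, x n k ^ 2) / 6))) l (𝓝 0) :=
    squeeze_zero_norm (fun n ↦ abs_prod_sinc_sub_exp_le (s n) (x n))
      (by simpa using h_pow_four.const_mul 2)
  simpa using tendsto_sub.add tendsto_exp

end Sinc

section Directions

theorem sum_cexp_two_mul_nat_mul_pi_div {N : ℕ} (hN : 1 < N) :
    ∑ k : Fin N, Complex.exp ((2 * (k * π / N) : ℝ) * Complex.I) = 0 := by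
  have hN₀ : (N : ℂ) ≠ 0 := mod_cast (by lia : N ≠ 0)
  rw [← (Complex.isPrimitiveRoot_exp N (by lia)).geom_sum_eq_zero hN,
    ← Fin.sum_univ_eq_sum_range (fun k ↦ Complex.exp (2 * π * Complex.I / N) ^ k)]
  refine Finset.sum_congr rfl fun k _ ↦ ?_
  rw [← Complex.exp_nat_mul]
  congr 1
  push_cast
  field_simp

theorem sum_sq_mul_cos_add_mul_sin {N : ℕ} (hN : 1 < N) (p q : ℝ) :
    ∑ k : Fin N, (p * cos (k * π / N) + q * sin (k * π / N)) ^ 2 = N / 2 * (p ^ 2 + q ^ 2) := by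
  have sum_cos : ∑ k : Fin N, cos (2 * (k * π / N)) = 0 := by
    simpa only [Complex.re_sum, Complex.exp_ofReal_mul_I_re, Complex.zero_re] using
      congrArg Complex.re (sum_cexp_two_mul_nat_mul_pi_div hN)
  have sum_sin : ∑ k : Fin N, sin (2 * (k * π / N)) = 0 := by
    simpa only [Complex.im_sum, Complex.exp_ofReal_mul_I_im, Complex.zero_im] using
      congrArg Complex.im (sum_cexp_two_mul_nat_mul_pi_div hN)
  have sq_eq_double_angle (θ : ℝ) : (p * cos θ + q * sin θ) ^ 2 =
      (p ^ 2 + q ^ 2) / 2 + (p ^ 2 - q ^ 2) / 2 * cos (2 * θ) + p * q * sin (2 * θ) := by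
    rw [sin_two_mul, cos_two_mul]
    linear_combination q ^ 2 * sin_sq_add_cos_sq θ
  simp only [sq_eq_double_angle, Finset.sum_add_distrib, ← Finset.mul_sum, sum_cos, sum_sin,
    Finset.sum_const, Finset.card_univ, Fintype.card_fin, nsmul_eq_mul]
  ring

theorem sq_mul_cos_add_mul_sin_le (p q θ : ℝ) :
    (p * cos θ + q * sin θ) ^ 2 ≤ p ^ 2 + q ^ 2 := by
  have lagrange : (p * cos θ + q * sin θ) ^ 2 + (p * sin θ - q * cos θ) ^ 2 = p ^ 2 + q ^ 2 := by
    linear_combination (p ^ 2 + q ^ 2) * sin_sq_add_cos_sq θ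
  linarith [sq_nonneg (p * sin θ - q * cos θ)]

theorem tendsto_prod_sinc_mul_cos_add_mul_sin (σ p q : ℝ) :
    Tendsto (fun N : ℕ ↦ ∏ k : Fin N, sinc (σ * √(24 / N) / 2 *
      (p * cos (k * π / N) + q * sin (k * π / N)))) atTop
      (𝓝 (exp (-(σ ^ 2 * (p ^ 2 + q ^ 2) / 2)))) := by
  have sq_eq (N : ℕ) (y : ℝ) : (σ * √(24 / N) / 2 * y) ^ 2 = 6 * σ ^ 2 / N * y ^ 2 := by
    rw [mul_pow, div_pow, mul_pow, sq_sqrt (by positivity)]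
    ring
  have limit_eq : σ ^ 2 * (p ^ 2 + q ^ 2) / 2 = 3 * σ ^ 2 * (p ^ 2 + q ^ 2) / 6 := by ring
  rw [limit_eq]
  refine tendsto_prod_sinc (fun _ ↦ Finset.univ) ?_ ?_
  · refine tendsto_const_nhds.congr' ?_
    filter_upwards [eventually_gt_atTop 1] with N hN
    have hN₀ : (N : ℝ) ≠ 0 := mod_cast (by lia : N ≠ 0)
    simp only [sq_eq, ← Finset.mul_sum, sum_sq_mul_cos_add_mul_sin hN]
    field_simp
    ring
  · refine squeeze_zero (fun N ↦ by positivity) (fun N ↦ ?_)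
      (tendsto_const_div_atTop_nhds_zero_nat ((6 * σ ^ 2 * (p ^ 2 + q ^ 2)) ^ 2))
    calc ∑ k : Fin N, (σ * √(24 / N) / 2 * (p * cos (k * π / N) + q * sin (k * π / N))) ^ 4
        ≤ ∑ _k : Fin N, (6 * σ ^ 2 / N * (p ^ 2 + q ^ 2)) ^ 2 := by
          refine Finset.sum_le_sum fun k _ ↦ ?_
          rw [pow_mul _ 2 2, sq_eq]
          gcongr
          exact sq_mul_cos_add_mul_sin_le p q _
      _ = (6 * σ ^ 2 * (p ^ 2 + q ^ 2)) ^ 2 / N := by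
          rcases eq_or_ne (N : ℝ) 0 with hN | hN
          · simp [hN]
          · simp only [Finset.sum_const, Finset.card_univ, Fintype.card_fin, nsmul_eq_mul]
            field_simp

end Directions

section UniformDir

theorem uniformDir_eq_map_cond {a : ℝ} (ha : 0 < a) (θ : ℝ) :
    uniformDir a θ = (volume[|Set.Icc (-(a / 2)) (a / 2)]).map (· • ![cos θ, sin θ]) := by
  simp [uniformDir, ProbabilityTheory.cond, ENNReal.ofReal_inv_of_pos ha]

theorem isProbabilityMeasure_uniformDir {a : ℝ} (ha : 0 < a) (θ : ℝ) :
    IsProbabilityMeasure (uniformDir a θ) := by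
  have : IsProbabilityMeasure (volume[|Set.Icc (-(a / 2)) (a / 2)]) :=
    cond_isProbabilityMeasure_of_finite (by simp [ha]) (by simp)
  rw [uniformDir_eq_map_cond ha]
  exact Measure.isProbabilityMeasure_map (by fun_prop)

theorem charFunDual_uniformDir {a : ℝ} (ha : 0 < a) (θ : ℝ) (L : StrongDual ℝ (Fin 2 → ℝ)) :
    charFunDual (uniformDir a θ) L =
      sinc (a / 2 * (L (Pi.single 0 1) * cos θ + L (Pi.single 1 1) * sin θ)) := by
  have apply_direction : L ![cos θ, sin θ] =
      L (Pi.single 0 1) * cos θ + L (Pi.single 1 1) * sin θ := by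
    rw [pi_eq_sum_univ' ![cos θ, sin θ]]
    simp [mul_comm]
  rw [uniformDir_eq_map_cond ha, charFunDual_map_smul_const,
    charFun_cond_Icc_neg_self (half_pos ha), apply_direction]

/-- The convolution `μ_N = μ(a, θ₁) ∗ ⋯ ∗ μ(a, θ_N)`, where `a = σ √(24 / N)` and
`θ_k = (k - 1) π / N`, as the law of a sum of independent vectors; the index `k : Fin N` starts
from `0`. -/
noncomputable def uniformDirConv (σ : ℝ) (N : ℕ) : Measure (Fin 2 → ℝ) :=
  (Measure.pi fun k : Fin N ↦ uniformDir (σ * √(24 / N)) (k * π / N)).map fun v ↦ ∑ k, v k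

variable {σ : ℝ}

theorem mul_sqrt_div_pos_of_fin (hσ : 0 < σ) {N : ℕ} (k : Fin N) : 0 < σ * √(24 / N) := by
  have : (0 : ℝ) < N := mod_cast k.pos
  positivity

theorem isProbabilityMeasure_uniformDirConv (hσ : 0 < σ) (N : ℕ) :
    IsProbabilityMeasure (uniformDirConv σ N) := by
  have (k : Fin N) := isProbabilityMeasure_uniformDir (mul_sqrt_div_pos_of_fin hσ k) (k * π / N)
  exact Measure.isProbabilityMeasure_map (by fun_prop)

theorem charFunDual_uniformDirConv (hσ : 0 < σ) (N : ℕ) (L : StrongDual ℝ (Fin 2 → ℝ)) :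
    charFunDual (uniformDirConv σ N) L = (∏ k : Fin N, sinc (σ * √(24 / N) / 2 *
      (L (Pi.single 0 1) * cos (k * π / N) + L (Pi.single 1 1) * sin (k * π / N))) : ℝ) := by
  have (k : Fin N) := isProbabilityMeasure_uniformDir (mul_sqrt_div_pos_of_fin hσ k) (k * π / N)
  rw [uniformDirConv, charFunDual_map_sum_pi_eq_prod, Finset.prod_apply, Complex.ofReal_prod]
  exact Finset.prod_congr rfl fun k _ ↦
    charFunDual_uniformDir (mul_sqrt_div_pos_of_fin hσ k) _ L

theorem tendsto_charFunDual_uniformDirConv (hσ : 0 < σ) (L : StrongDual ℝ (Fin 2 → ℝ)) :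
    Tendsto (fun N ↦ charFunDual (uniformDirConv σ N) L) atTop
      (𝓝 (charFunDual (Measure.pi fun _ ↦ gaussianReal 0 (σ ^ 2).toNNReal) L)) := by
  have gaussian_eq : charFunDual (Measure.pi fun _ ↦ gaussianReal 0 (σ ^ 2).toNNReal) L =
      (exp (-(σ ^ 2 * (L (Pi.single 0 1) ^ 2 + L (Pi.single 1 1) ^ 2) / 2)) : ℝ) := by
    rw [charFunDual_pi_gaussianReal, Complex.ofReal_exp, coe_toNNReal _ (sq_nonneg σ)]
    congr 1
    push_cast [Fin.sum_univ_two]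
    ring
  simp only [charFunDual_uniformDirConv hσ, gaussian_eq]
  exact (Complex.continuous_ofReal.tendsto _).comp
    (tendsto_prod_sinc_mul_cos_add_mul_sin σ _ _)

end UniformDir

/-- For `σ > 0`, the `N`-fold convolutions `μ(a, θ₁) ∗ ⋯ ∗ μ(a, θ_N)` (realized as the
pushforward of the product measure under the sum map), with `θ_k = (k-1)π/N` and
`a = σ √(24/N)`, converge weakly as `N → ∞` to the centered Gaussian measure on `ℝ²` with
covariance `σ² I`, i.e. the product of two one-dimensional Gaussians with mean `0` and
variance `σ²`: the integrals of every bounded continuous function converge. -/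
theorem uniformDir_conv_tendsto_gaussian (σ : ℝ) (hσ : 0 < σ) :
    ∀ f : BoundedContinuousFunction (Fin 2 → ℝ) ℝ,
      Tendsto (fun N : ℕ =>
          ∫ z, f z ∂(Measure.map (fun v : Fin N → (Fin 2 → ℝ) => ∑ k, v k)
            (Measure.pi fun k : Fin N =>
              uniformDir (σ * Real.sqrt (24 / (N : ℝ))) ((k : ℝ) * π / (N : ℝ)))))
        atTop
        (nhds (∫ z, f z
          ∂(Measure.pi fun _ : Fin 2 => ProbabilityTheory.gaussianReal 0 (σ ^ 2).toNNReal))) := by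
  let convolution (N : ℕ) : ProbabilityMeasure (Fin 2 → ℝ) :=
    ⟨uniformDirConv σ N, isProbabilityMeasure_uniformDirConv hσ N⟩
  let gaussian : ProbabilityMeasure (Fin 2 → ℝ) :=
    ⟨Measure.pi fun _ ↦ gaussianReal 0 (σ ^ 2).toNNReal, inferInstance⟩
  have tendsto_convolution : Tendsto convolution atTop (𝓝 gaussian) :=
    tendsto_of_tendsto_charFunDual (tendsto_charFunDual_uniformDirConv hσ)
  exact ProbabilityMeasure.tendsto_iff_forall_integral_tendsto.mp tendsto_convolution
end

section
/- Let φ ∈ (0, π) with sin φ ≠ 0, cos φ ≠ 0, and tan φ ≠ cot φ, and set t = |tan φ − cot φ|/2 and e(φ) = (1 + t + √(1 + t²))/(1 + t − √(1 + t²)). Let a₁, a₂, a₃, a₄ > 0, let C_a = (1/24)·[[2a₁² + a₂² + a₄², a₂² − a₄²], [a₂² − a₄², 2a₃² + a₂² + a₄²]], and D = (a₁² − a₃²)² + (a₂² − a₄²)². If the unit vector (cos φ, sin φ) is an eigenvector of C_a corresponding to its larger eigenvalue (a₁² + a₂² + a₃² + a₄² + √D)/24, then the elongation satisfies (∑ a_k²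 + √D)/(∑ a_k² − √D) ≤ e(φ). -/
open Real

/-!
Let `A` be a real symmetric `2 × 2` matrix with an eigenvector in the direction `(cos φ, sin φ)`.
Eliminating the eigenvalue gives `|A 0 0 - A 1 1| = 2 t |A 0 1|` with `t = |cot 2φ|`, so the
discriminant of `A` is `(2 |A 0 1| √(1 + t²))²`. Every covariance matrix of the four-directional
box spline is diagonally dominant, and diagonal dominance bounds the trace from below by
`|A 0 0 - A 1 1| + 2 |A 0 1| = 2 |A 0 1| (1 + t)`. Hence the eigenvalue gap is at most
`√(1 + t²) / (1 + t)` times the trace, and the quotient of the eigenvalues is an increasing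
function of that ratio.
-/

/-- The bound `e` for the elongation, as a function of `t = |tan φ - cot φ| / 2`. For `t = 0` the
denominator vanishes and the value is the junk value `0`. -/
noncomputable def elongationBound (t : ℝ) : ℝ :=
  (1 + t + √(1 + t ^ 2)) / (1 + t - √(1 + t ^ 2))

/-- The quantity `|tan φ - cot φ| / 2 = |cot 2φ|` for the direction `φ` of a plane vector `v`,
written in coordinates so that `v` need not be a unit vector. It is meaningful only if both
coordinates are nonzero. -/
noncomputable def tilt (v : Fin 2 → ℝ) : ℝ :=
  |v 1 / v 0 - v 0 / v 1| / 2

/-- The covariance matrix `C_a` of the four-directional box spline with scale vector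
`a = (a₁, a₂, a₃, a₄)`. -/
noncomputable def boxSplineCov (a₁ a₂ a₃ a₄ : ℝ) : Matrix (Fin 2) (Fin 2) ℝ :=
  (1 / 24 : ℝ) • !![2 * a₁ ^ 2 + a₂ ^ 2 + a₄ ^ 2, a₂ ^ 2 - a₄ ^ 2;
                    a₂ ^ 2 - a₄ ^ 2, 2 * a₃ ^ 2 + a₂ ^ 2 + a₄ ^ 2]

theorem sqrt_one_add_sq_lt_one_add {t : ℝ} (ht : 0 < t) : √(1 + t ^ 2) < 1 + t := by
  rw [Real.sqrt_lt' (by positivity)]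
  linarith [add_sq 1 t]

theorem add_div_sub_le_add_div_sub {K : Type*} [Field K] [LinearOrder K] [IsStrictOrderedRing K]
    {a b c d : K} (hb : 0 < b) (hd : 0 < d) (hcd : c < d) (h : a / b ≤ c / d) :
    (b + a) / (b - a) ≤ (d + c) / (d - c) := by
  have hab : a < b := (div_lt_one hb).mp (h.trans_lt ((div_lt_one hd).mpr hcd))
  rw [div_le_div_iff₀ hb hd] at h
  rw [div_le_div_iff₀ (sub_pos.mpr hab) (sub_pos.mpr hcd)]
  linarith

theorem tilt_pos {v : Fin 2 → ℝ} (hv : v 1 / v 0 ≠ v 0 / v 1) : 0 < tilt v :=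
  half_pos (abs_pos.mpr (sub_ne_zero.mpr hv))

theorem discr_eq_sq_of_mulVec_eq_smul {R : Type*} [CommRing R] [IsDomain R]
    {A : Matrix (Fin 2) (Fin 2) R} {v : Fin 2 → R} {μ : R} (hv : v ≠ 0)
    (h : A.mulVec v = μ • v) : A.discr = (2 * μ - A.trace) ^ 2 := by
  have hdet : (A - Matrix.scalar (Fin 2) μ).det = 0 :=
    Matrix.exists_mulVec_eq_zero_iff.mp ⟨v, hv, by
      rw [Matrix.sub_mulVec, h, Matrix.scalar_apply, Matrix.diagonal_const_mulVec, sub_self]⟩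
  have hchar : (A 0 0 - μ) * (A 1 1 - μ) - A 0 1 * A 1 0 = 0 := by
    simpa [Matrix.det_fin_two] using hdet
  rw [Matrix.discr_fin_two, Matrix.trace_fin_two, Matrix.det_fin_two]
  linear_combination -4 * hchar

section SymmetricMatrix

variable {A : Matrix (Fin 2) (Fin 2) ℝ} {v : Fin 2 → ℝ} {μ : ℝ}

theorem abs_diag_sub_eq_of_mulVec_eq_smul (hA : A.IsSymm) (hv₀ : v 0 ≠ 0) (hv₁ : v 1 ≠ 0)
    (h : A.mulVec v = μ • v) : |A 0 0 - A 1 1| = 2 * tilt v * |A 0 1| := by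
  have h₀ : A 0 0 * v 0 + A 0 1 * v 1 = μ * v 0 := by
    simpa [Matrix.mulVec, dotProduct] using congrFun h 0
  have h₁ : A 0 1 * v 0 + A 1 1 * v 1 = μ * v 1 := by
    simpa [Matrix.mulVec, dotProduct, hA.apply 0 1] using congrFun h 1
  have hdiff : A 0 0 - A 1 1 = -((v 1 / v 0 - v 0 / v 1) * A 0 1) := by
    field_simp
    linear_combination v 1 * h₀ - v 0 * h₁
  rw [hdiff, abs_neg, abs_mul, tilt]
  ring

theorem abs_two_mul_sub_trace_of_mulVec_eq_smul (hA : A.IsSymm) (hv₀ : v 0 ≠ 0) (hv₁ : v 1 ≠ 0)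
    (h : A.mulVec v = μ • v) :
    |2 * μ - A.trace| = 2 * |A 0 1| * √(1 + tilt v ^ 2) := by
  have hv : v ≠ 0 := fun hv => hv₀ (congrFun hv 0)
  have hdiscr : A.discr = |A 0 0 - A 1 1| ^ 2 + (2 * |A 0 1|) ^ 2 := by
    rw [Matrix.discr_fin_two, Matrix.trace_fin_two, Matrix.det_fin_two, hA.apply 0 1, mul_pow,
      sq_abs, sq_abs]
    ring
  calc |2 * μ - A.trace|
      = √A.discr := by rw [discr_eq_sq_of_mulVec_eq_smul hv h, Real.sqrt_sq_eq_abs]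
    _ = √((2 * |A 0 1|) ^ 2 * (1 + tilt v ^ 2)) := by
      rw [hdiscr, abs_diag_sub_eq_of_mulVec_eq_smul hA hv₀ hv₁ h]
      ring_nf
    _ = 2 * |A 0 1| * √(1 + tilt v ^ 2) := by
      rw [Real.sqrt_mul (by positivity), Real.sqrt_sq (by positivity)]

theorem abs_diag_sub_add_le_trace (h₀ : |A 0 1| ≤ A 0 0) (h₁ : |A 0 1| ≤ A 1 1) :
    |A 0 0 - A 1 1| + 2 * |A 0 1| ≤ A.trace := by
  rw [Matrix.trace_fin_two]
  rcases abs_cases (A 0 0 - A 1 1) with ⟨hd, -⟩ | ⟨hd, -⟩ <;> linarith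

theorem two_mul_sub_trace_div_trace_le (hA : A.IsSymm) (h₀ : |A 0 1| ≤ A 0 0)
    (h₁ : |A 0 1| ≤ A 1 1) (htr : 0 < A.trace) (hv₀ : v 0 ≠ 0) (hv₁ : v 1 ≠ 0)
    (h : A.mulVec v = μ • v) :
    (2 * μ - A.trace) / A.trace ≤ √(1 + tilt v ^ 2) / (1 + tilt v) := by
  have ht : 0 ≤ tilt v := div_nonneg (abs_nonneg _) zero_le_two
  have htrace : 2 * |A 0 1| * (1 + tilt v) ≤ A.trace := by
    linarith [abs_diag_sub_add_le_trace h₀ h₁, abs_diag_sub_eq_of_mulVec_eq_smul hA hv₀ hv₁ h]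
  rw [div_le_div_iff₀ htr (by positivity)]
  calc (2 * μ - A.trace) * (1 + tilt v)
      ≤ |2 * μ - A.trace| * (1 + tilt v) := by gcongr; exact le_abs_self _
    _ = √(1 + tilt v ^ 2) * (2 * |A 0 1| * (1 + tilt v)) := by
      rw [abs_two_mul_sub_trace_of_mulVec_eq_smul hA hv₀ hv₁ h]
      ring
    _ ≤ √(1 + tilt v ^ 2) * A.trace := by gcongr

/-- Since `A.trace - μ` is the other eigenvalue, the left-hand side is the elongation when `μ` is
the larger one. -/
theorem elongation_le_bound_general (hA : A.IsSymm) (h₀ : |A 0 1| ≤ A 0 0)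
    (h₁ : |A 0 1| ≤ A 1 1) (htr : 0 < A.trace) (hv₀ : v 0 ≠ 0) (hv₁ : v 1 ≠ 0)
    (hv : v 1 / v 0 ≠ v 0 / v 1) (h : A.mulVec v = μ • v) :
    μ / (A.trace - μ) ≤ elongationBound (tilt v) := by
  have ht : 0 < tilt v := tilt_pos hv
  have hquot : μ / (A.trace - μ) =
      (A.trace + (2 * μ - A.trace)) / (A.trace - (2 * μ - A.trace)) := by
    rw [← mul_div_mul_left μ _ (two_ne_zero (α := ℝ))]
    ring_nf
  rw [hquot, elongationBound]
  exact add_div_sub_le_add_div_sub htr (by positivity) (sqrt_one_add_sq_lt_one_add ht)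
    (two_mul_sub_trace_div_trace_le hA h₀ h₁ htr hv₀ hv₁ h)

end SymmetricMatrix

section BoxSpline

variable (a₁ a₂ a₃ a₄ : ℝ)

theorem boxSplineCov_isSymm : (boxSplineCov a₁ a₂ a₃ a₄).IsSymm := by
  ext i j
  fin_cases i <;> fin_cases j <;> rfl

theorem trace_boxSplineCov :
    (boxSplineCov a₁ a₂ a₃ a₄).trace = (a₁ ^ 2 + a₂ ^ 2 + a₃ ^ 2 + a₄ ^ 2) / 12 := by
  simp only [boxSplineCov, Matrix.trace_smul, Matrix.trace_fin_two_of, smul_eq_mul]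
  ring

theorem abs_boxSplineCov_zero_one_le_zero_zero :
    |boxSplineCov a₁ a₂ a₃ a₄ 0 1| ≤ boxSplineCov a₁ a₂ a₃ a₄ 0 0 := by
  have h₀₁ : boxSplineCov a₁ a₂ a₃ a₄ 0 1 = 1 / 24 * (a₂ ^ 2 - a₄ ^ 2) := rfl
  have h₀₀ : boxSplineCov a₁ a₂ a₃ a₄ 0 0 = 1 / 24 * (2 * a₁ ^ 2 + a₂ ^ 2 + a₄ ^ 2) := rfl
  rw [h₀₁, h₀₀, abs_le]
  constructor <;> linarith [sq_nonneg a₁, sq_nonneg a₂, sq_nonneg a₄]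

theorem abs_boxSplineCov_zero_one_le_one_one :
    |boxSplineCov a₁ a₂ a₃ a₄ 0 1| ≤ boxSplineCov a₁ a₂ a₃ a₄ 1 1 := by
  have h₀₁ : boxSplineCov a₁ a₂ a₃ a₄ 0 1 = 1 / 24 * (a₂ ^ 2 - a₄ ^ 2) := rfl
  have h₁₁ : boxSplineCov a₁ a₂ a₃ a₄ 1 1 = 1 / 24 * (2 * a₃ ^ 2 + a₂ ^ 2 + a₄ ^ 2) := rfl
  rw [h₀₁, h₁₁, abs_le]
  constructor <;> linarith [sq_nonneg a₂, sq_nonneg a₃, sq_nonneg a₄]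

variable {a₁ a₂ a₃ a₄}

theorem boxSplineCov_elongation_le {v : Fin 2 → ℝ} {r : ℝ}
    (ha : 0 < a₁ ^ 2 + a₂ ^ 2 + a₃ ^ 2 + a₄ ^ 2) (hv₀ : v 0 ≠ 0) (hv₁ : v 1 ≠ 0)
    (hv : v 1 / v 0 ≠ v 0 / v 1)
    (h : (boxSplineCov a₁ a₂ a₃ a₄).mulVec v =
      ((a₁ ^ 2 + a₂ ^ 2 + a₃ ^ 2 + a₄ ^ 2 + r) / 24) • v) :
    (a₁ ^ 2 + a₂ ^ 2 + a₃ ^ 2 + a₄ ^ 2 + r) / (a₁ ^ 2 + a₂ ^ 2 + a₃ ^ 2 + a₄ ^ 2 - r) ≤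
      elongationBound (tilt v) := by
  have htr : 0 < (boxSplineCov a₁ a₂ a₃ a₄).trace := by
    rw [trace_boxSplineCov]
    positivity
  convert elongation_le_bound_general (boxSplineCov_isSymm a₁ a₂ a₃ a₄)
    (abs_boxSplineCov_zero_one_le_zero_zero a₁ a₂ a₃ a₄)
    (abs_boxSplineCov_zero_one_le_one_one a₁ a₂ a₃ a₄) htr hv₀ hv₁ hv h using 1
  rw [trace_boxSplineCov, ← div_div_div_cancel_right₀ (by norm_num : (24 : ℝ) ≠ 0)]
  ring_nf

end BoxSpline

/-- **Elongation bound.** Let `φ ∈ (0, π)` with `sin φ ≠ 0`, `cos φ ≠ 0`, `tan φ ≠ cot φ`, and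
set `t = |tan φ − cot φ|/2`, `e(φ) = (1 + t + √(1+t²))/(1 + t − √(1+t²))`. If the unit vector
`(cos φ, sin φ)` is an eigenvector of the covariance matrix `C_a` of the four-directional box
spline for its larger eigenvalue `(∑ a_k² + √D)/24`, then the elongation satisfies
`(∑ a_k² + √D)/(∑ a_k² − √D) ≤ e(φ)`. -/
theorem elongation_le_bound (φ t e : ℝ) (hφ : φ ∈ Set.Ioo 0 π)
    (hsin : Real.sin φ ≠ 0) (hcos : Real.cos φ ≠ 0)
    (htc : Real.tan φ ≠ Real.cos φ / Real.sin φ)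
    (ht : t = |Real.tan φ - Real.cos φ / Real.sin φ| / 2)
    (he : e = (1 + t + Real.sqrt (1 + t ^ 2)) / (1 + t - Real.sqrt (1 + t ^ 2)))
    (a₁ a₂ a₃ a₄ D : ℝ)
    (h₁ : 0 < a₁) (h₂ : 0 < a₂) (h₃ : 0 < a₃) (h₄ : 0 < a₄)
    (hD : D = (a₁ ^ 2 - a₃ ^ 2) ^ 2 + (a₂ ^ 2 - a₄ ^ 2) ^ 2)
    (C : Matrix (Fin 2) (Fin 2) ℝ)
    (hC : C = (1 / 24 : ℝ) • !![2 * a₁ ^ 2 + a₂ ^ 2 + a₄ ^ 2, a₂ ^ 2 - a₄ ^ 2;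
                                a₂ ^ 2 - a₄ ^ 2, 2 * a₃ ^ 2 + a₂ ^ 2 + a₄ ^ 2])
    (heig : C.mulVec ![Real.cos φ, Real.sin φ] =
      ((a₁ ^ 2 + a₂ ^ 2 + a₃ ^ 2 + a₄ ^ 2 + Real.sqrt D) / 24) •
        ![Real.cos φ, Real.sin φ]) :
    (a₁ ^ 2 + a₂ ^ 2 + a₃ ^ 2 + a₄ ^ 2 + Real.sqrt D) /
        (a₁ ^ 2 + a₂ ^ 2 + a₃ ^ 2 + a₄ ^ 2 - Real.sqrt D) ≤ e := by
  subst hC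
  rw [he, ht, tan_eq_sin_div_cos]
  exact boxSplineCov_elongation_le (v := ![cos φ, sin φ]) (by positivity) hcos hsin
    (tan_eq_sin_div_cos φ ▸ htc) heig
end

section
/- Let a₁, a₂, a₃, a₄ > 0, and set p = 3·(a₁² − a₂² − a₃² + a₄²), q = 4·(a₁² + a₂² − a₃² − a₄²), and r = 5·(a₁² + a₂² + a₃² + a₄²). Let C′_a be the 2×2 matrix (1/60)·[[4a₁² + a₂² + a₃² + 4a₄², 2(a₁² + a₂² − a₃² − a₄²)], [2(a₁² + a₂² − a₃² − a₄²), a₁² + 4a₂² + 4a₃² + a₄²]]. Then the eigenvalues of C′_a are (r + √(p² + q²))/120 and (r − √(p² + q²))/120; moreover, if q ≠ 0, the vector (q, −p + √(p² + q²)) is an eigenvector of C′_a for the larger eigenvalue (r + √(p² + q²))/120, so the orientation θ satisfies tan θ = (−p + √(p² + q²))/q. -/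
open Real

/-!
The trace `r / 60` and determinant `(r² - p² - q²) / 14400` of `C` are the sum and product of
`(r ± √(p² + q²)) / 120`, so these are its eigenvalues. Every root `μ` of the characteristic
polynomial of a `2 × 2` matrix `A` satisfies `A v = μ v` for `v = (A₀₁, μ - A₀₀)`: the first
coordinate is an identity and the second is the characteristic equation. For `C` and its larger
eigenvalue, `120 v` is `(q, -p + √(p² + q²))`.
-/

section FinTwo

open Polynomial (X C)

variable {R K : Type*} [CommRing R] [Field K]

theorem charpoly_fin_two_eq_mul {A : Matrix (Fin 2) (Fin 2) R} {μ ν : R}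
    (htrace : A.trace = μ + ν) (hdet : A.det = μ * ν) :
    A.charpoly = (X - C μ) * (X - C ν) := by
  nontriviality R
  rw [Matrix.charpoly_fin_two, htrace, hdet, C.map_add, C.map_mul]
  ring

theorem spectrum_fin_two_eq_pair {A : Matrix (Fin 2) (Fin 2) K} {μ ν : K}
    (htrace : A.trace = μ + ν) (hdet : A.det = μ * ν) : spectrum K A = {μ, ν} := by
  ext x
  rw [Matrix.mem_spectrum_iff_isRoot_charpoly, charpoly_fin_two_eq_mul htrace hdet,
    Polynomial.root_mul, Polynomial.root_X_sub_C, Polynomial.root_X_sub_C,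
    Set.mem_insert_iff, Set.mem_singleton_iff, eq_comm, eq_comm (a := ν)]

theorem isRoot_charpoly_fin_two_iff {A : Matrix (Fin 2) (Fin 2) R} {μ : R} :
    A.charpoly.IsRoot μ ↔ (μ - A 0 0) * (μ - A 1 1) = A 0 1 * A 1 0 := by
  rw [Polynomial.IsRoot.def, Matrix.eval_charpoly, Matrix.det_fin_two, ← sub_eq_zero (b := _ * _)]
  simp

theorem mulVec_fin_two_eq_smul_of_isRoot_charpoly {A : Matrix (Fin 2) (Fin 2) R} {μ : R}
    (hμ : A.charpoly.IsRoot μ) :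
    A.mulVec ![A 0 1, μ - A 0 0] = μ • ![A 0 1, μ - A 0 0] := by
  have hfst : A 0 0 * A 0 1 + A 0 1 * (μ - A 0 0) = μ * A 0 1 := by ring
  have hsnd : A 1 0 * A 0 1 + A 1 1 * (μ - A 0 0) = μ * (μ - A 0 0) := by
    linear_combination -isRoot_charpoly_fin_two_iff.mp hμ
  rw [Matrix.smul_vec2, smul_eq_mul, smul_eq_mul, ← hfst, ← hsnd]
  ext i
  fin_cases i <;> exact Matrix.vec2_dotProduct _ _

end FinTwo

theorem tan_eq_div_of_cos_sin_eq_smul {θ c x y : ℝ} (hcos : cos θ ≠ 0)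
    (h : (![cos θ, sin θ] : Fin 2 → ℝ) = c • ![x, y]) : tan θ = y / x := by
  have hx : cos θ = c * x := by simpa using congrFun h 0
  have hy : sin θ = c * y := by simpa using congrFun h 1
  have hc : c ≠ 0 := left_ne_zero_of_mul (hx ▸ hcos)
  rw [tan_eq_sin_div_cos, hx, hy, mul_div_mul_left _ _ hc]

/-- With `p = 3(a₁²−a₂²−a₃²+a₄²)`, `q = 4(a₁²+a₂²−a₃²−a₄²)`, `r = 5(a₁²+a₂²+a₃²+a₄²)`, the
eigenvalues of the covariance matrix `C′_a` of the second four-directional box spline are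
`(r ± √(p²+q²))/120`; moreover, if `q ≠ 0`, the vector `(q, −p+√(p²+q²))` is an eigenvector
for the larger eigenvalue `(r+√(p²+q²))/120`, so the orientation `θ` satisfies
`tan θ = (−p+√(p²+q²))/q`. -/
theorem eigen_second_fourDirectional_cov (a₁ a₂ a₃ a₄ p q r : ℝ)
    (h₁ : 0 < a₁) (h₂ : 0 < a₂) (h₃ : 0 < a₃) (h₄ : 0 < a₄)
    (hp : p = 3 * (a₁ ^ 2 - a₂ ^ 2 - a₃ ^ 2 + a₄ ^ 2))
    (hq : q = 4 * (a₁ ^ 2 + a₂ ^ 2 - a₃ ^ 2 - a₄ ^ 2))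
    (hr : r = 5 * (a₁ ^ 2 + a₂ ^ 2 + a₃ ^ 2 + a₄ ^ 2))
    (C : Matrix (Fin 2) (Fin 2) ℝ)
    (hC : C = (1 / 60 : ℝ) •
      !![4 * a₁ ^ 2 + a₂ ^ 2 + a₃ ^ 2 + 4 * a₄ ^ 2,
          2 * (a₁ ^ 2 + a₂ ^ 2 - a₃ ^ 2 - a₄ ^ 2);
        2 * (a₁ ^ 2 + a₂ ^ 2 - a₃ ^ 2 - a₄ ^ 2),
          a₁ ^ 2 + 4 * a₂ ^ 2 + 4 * a₃ ^ 2 + a₄ ^ 2]) :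
    spectrum ℝ C =
        {(r + Real.sqrt (p ^ 2 + q ^ 2)) / 120, (r - Real.sqrt (p ^ 2 + q ^ 2)) / 120} ∧
      (q ≠ 0 →
        (![q, -p + Real.sqrt (p ^ 2 + q ^ 2)] : Fin 2 → ℝ) ≠ 0 ∧
        C.mulVec ![q, -p + Real.sqrt (p ^ 2 + q ^ 2)] =
          ((r + Real.sqrt (p ^ 2 + q ^ 2)) / 120) •
            ![q, -p + Real.sqrt (p ^ 2 + q ^ 2)] ∧
        (∀ θ : ℝ, Real.cos θ ≠ 0 →
          (∃ c : ℝ, (![Real.cos θ, Real.sin θ] : Fin 2 → ℝ) =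
            c • ![q, -p + Real.sqrt (p ^ 2 + q ^ 2)]) →
          Real.tan θ = (-p + Real.sqrt (p ^ 2 + q ^ 2)) / q)) := by
  have hentries : C = !![(r + p) / 120, q / 120; q / 120, (r - p) / 120] := by
    simp only [hC, hp, hq, hr, Matrix.smul_of, Matrix.smul_cons, Matrix.smul_empty, smul_eq_mul]
    ring_nf
  set s := √(p ^ 2 + q ^ 2)
  have hsq : s ^ 2 = p ^ 2 + q ^ 2 := sq_sqrt (by positivity)
  have hspec : spectrum ℝ C = {(r + s) / 120, (r - s) / 120} := by
    apply spectrum_fin_two_eq_pair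
    · rw [hentries, Matrix.trace_fin_two_of]
      ring
    · rw [hentries, Matrix.det_fin_two_of]
      linear_combination hsq / 14400
  have hroot : C.charpoly.IsRoot ((r + s) / 120) :=
    Matrix.mem_spectrum_iff_isRoot_charpoly.mp (hspec ▸ Set.mem_insert _ _)
  have hvec : (![q, -p + s] : Fin 2 → ℝ) = (120 : ℝ) • ![C 0 1, (r + s) / 120 - C 0 0] := by
    rw [hentries, Matrix.smul_vec2]
    exact Matrix.vec2_eq (show q = 120 * (q / 120) by ring)
      (show -p + s = 120 * ((r + s) / 120 - (r + p) / 120) by ring)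
  refine ⟨hspec, fun hq₀ => ⟨fun h => hq₀ (congrFun h 0), ?_, ?_⟩⟩
  · rw [hvec, Matrix.mulVec_smul, mulVec_fin_two_eq_smul_of_isRoot_charpoly hroot, smul_comm]
  · rintro θ hcos ⟨c, hdir⟩
    exact tan_eq_div_of_cos_sin_eq_smul hcos hdir
end
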